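/- If G is a k-chromatic graph of order n with a vertex of degree n−1 and x ≥ k is a natural number, then π(G,x) = (x)_↓k·(x−1)^(n−k) holds if and only if G is a connected k-chromatic graph of order n with exactly C(k,2)+n−k edges and clique number k. -/

import Mathlib

/-- The number of proper `x`-colourings of `G`. -/
noncomputable def numColorings {V : Type} [Fintype V] (G : SimpleGraph V) (x : ℕ) : ℕ :=
  Nat.card {f : V → Fin x // ∀ ⦃u w : V⦄, G.Adj u w → f u ≠ f w}

section aux
open Finset

/-- proper colourings as a predicate -/
def PropCol {V : Type} (G : SimpleGraph V) (x : ℕ) (f : V → Fin x) : Prop :=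
  ∀ ⦃u w : V⦄, G.Adj u w → f u ≠ f w

/-- `G` is a complete graph on `K` plus isolated vertices. -/
def StructOn {V : Type} (G : SimpleGraph V) (K : Finset V) : Prop :=
  ∀ a b, G.Adj a b ↔ a ∈ K ∧ b ∈ K ∧ a ≠ b

lemma colorable_of_propCol {V : Type} {G : SimpleGraph V} {x : ℕ} {f : V → Fin x}
    (h : PropCol G x f) : G.Colorable x :=
  ⟨SimpleGraph.Coloring.mk f (fun {_ _} hab => h hab)⟩

lemma exists_propCol {V : Type} {G : SimpleGraph V} {x : ℕ} (h : G.Colorable x) :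
    ∃ f, PropCol G x f := by
  obtain ⟨c⟩ := h
  exact ⟨c, fun u w huw => c.valid huw⟩

lemma exists_degree_ge {V : Type} [Fintype V] [DecidableEq V] (G : SimpleGraph V)
    [DecidableRel G.Adj] (j : ℕ) (h : ¬ G.Colorable j) : ∃ u, j ≤ G.degree u := by
  by_contra! hd
  apply h
  rcases isEmpty_or_nonempty V with hV | ⟨⟨v0⟩⟩
  · exact SimpleGraph.Colorable.of_isEmpty _
  have hj : 0 < j := lt_of_le_of_lt (Nat.zero_le _) (hd v0)
  have key : ∀ A : Finset V, ∃ f : V → Fin j, ∀ u ∈ A, ∀ w ∈ A, G.Adj u w → f u ≠ f w := by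
    intro A
    induction A using Finset.induction_on with
    | empty => exact ⟨fun _ => ⟨0, hj⟩, by simp⟩
    | insert a A ha ih =>
      obtain ⟨f, hf⟩ := ih
      have : ∃ c : Fin j, c ∉ (G.neighborFinset a).image f := by
        by_contra! hc
        have h1 : (univ : Finset (Fin j)) ⊆ (G.neighborFinset a).image f := fun c _ => hc c
        have h2 := card_le_card h1
        have h3 := card_image_le (s := G.neighborFinset a) (f := f)
        have h4 := hd a
        rw [SimpleGraph.card_neighborFinset_eq_degree] at h3
        simp at h2
        omega
      obtain ⟨c, hc⟩ := this
      have hc' : ∀ w, G.Adj a w → f w ≠ c := by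
        intro w hw he
        exact hc (mem_image.2 ⟨w, by simpa using hw, he⟩)
      refine ⟨Function.update f a c, ?_⟩
      intro u hu w hw huw
      rcases eq_or_ne u a with rfl | hua
      · have : w ≠ u := huw.ne'
        rw [Function.update_self, Function.update_of_ne this]
        exact (hc' w huw).symm
      · rcases eq_or_ne w a with rfl | hwa
        · rw [Function.update_self, Function.update_of_ne hua]
          exact hc' u huw.symm
        · rw [Function.update_of_ne hua, Function.update_of_ne hwa]
          exact hf u (by simpa [hua] using hu) w (by simpa [hwa] using hw) huw
  obtain ⟨f, hf⟩ := key univ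
  exact colorable_of_propCol (f := f) (fun u w huw => hf u (mem_univ _) w (mem_univ _) huw)

lemma numColorings_struct {V : Type} [Fintype V] (G : SimpleGraph V) (K : Finset V)
    (h : StructOn G K) (y : ℕ) :
    numColorings G y = y.descFactorial K.card * y ^ (Fintype.card V - K.card) := by
  classical
  have e : {f : V → Fin y // ∀ ⦃u w : V⦄, G.Adj u w → f u ≠ f w} ≃
      ((K ↪ Fin y) × ({a // a ∉ K} → Fin y)) :=
    { toFun := fun f => (⟨fun a => f.1 a, fun a b hab => by
          by_contra hne
          exact f.2 ((h a b).2 ⟨a.2, b.2, fun hh => hne (Subtype.ext hh)⟩) hab⟩, fun a => f.1 a)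
      invFun := fun p => ⟨fun a => if ha : a ∈ K then p.1 ⟨a, ha⟩ else p.2 ⟨a, ha⟩, by
        intro a b hab
        obtain ⟨ha, hb, hne⟩ := (h a b).1 hab
        simp only [ha, hb, dif_pos]
        intro hh
        exact hne (congrArg Subtype.val (p.1.injective hh))⟩
      left_inv := by
        intro f
        ext a
        by_cases ha : a ∈ K <;> simp [ha] <;> rfl
      right_inv := by
        rintro ⟨p, q⟩
        ext a
        · simp
        · have := a.2
          simp [this] }
  unfold numColorings
  rw [Nat.card_congr e, Nat.card_prod, Nat.card_eq_fintype_card, Nat.card_eq_fintype_card,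
    Fintype.card_embedding_eq, Fintype.card_fun]
  simp [Fintype.card_subtype_compl]

/-- Colourings with zero class exactly `S`. -/
noncomputable def cnt {V : Type} (G : SimpleGraph V) (z : ℕ) (S : Finset V) : ℕ :=
  Nat.card {f : V → Fin (z + 1) // PropCol G (z + 1) f ∧ ∀ a, f a = 0 ↔ a ∈ S}

lemma numColorings_succ {V : Type} [Fintype V] (G : SimpleGraph V) (z : ℕ) (u : V) :
    numColorings G (z + 1) =
      (z + 1) * Nat.card {f : V → Fin (z + 1) // PropCol G (z + 1) f ∧ f u = 0} := by
  have e : {f : V → Fin (z + 1) // ∀ ⦃u w : V⦄, G.Adj u w → f u ≠ f w} ≃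
      (Fin (z + 1) × {f : V → Fin (z + 1) // PropCol G (z + 1) f ∧ f u = 0}) :=
    { toFun := fun f => (f.1 u, ⟨fun a => Equiv.swap 0 (f.1 u) (f.1 a), by
          intro a b hab hh
          exact f.2 hab ((Equiv.injective _) hh), by simp⟩)
      invFun := fun p => ⟨fun a => Equiv.swap 0 p.1 (p.2.1 a), by
          intro a b hab hh
          exact p.2.2.1 hab ((Equiv.injective _) hh)⟩
      left_inv := by
        intro f
        ext a
        simp
      right_inv := by
        rintro ⟨c, f, hf, hu⟩
        ext a
        · simp [hu]
        · simp [hu] }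
  unfold numColorings
  rw [Nat.card_congr e, Nat.card_prod]
  simp

lemma cnt_eq {V : Type} [Fintype V] (G : SimpleGraph V) (z : ℕ) (S : Finset V)
    (hS : ∀ a ∈ S, ∀ b ∈ S, ¬ G.Adj a b) [Fintype {a // a ∉ S}] :
    cnt G z S = numColorings (G.comap (fun a : {a // a ∉ S} => a.1)) z := by
  classical
  unfold cnt numColorings
  apply Nat.card_congr
  exact
    { toFun := fun f => ⟨fun a => (f.1 a).pred (fun h => a.2 ((f.2.2 a).1 h)), by
          intro a b hab hh
          exact f.2.1 hab (Fin.pred_inj.1 hh)⟩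
      invFun := fun g => ⟨fun a => if ha : a ∈ S then 0 else (g.1 ⟨a, ha⟩).succ, by
          constructor
          · intro a b hab
            by_cases ha : a ∈ S <;> by_cases hb : b ∈ S
            · exact absurd hab (hS a ha b hb)
            · simp [ha, hb, (Fin.succ_ne_zero _).symm]
            · simp [ha, hb]
            · simp only [ha, hb, dif_neg, not_false_eq_true]
              intro hh
              exact g.2 (u := ⟨a, ha⟩) (w := ⟨b, hb⟩) hab (Fin.succ_injective _ hh)
          · intro a
            by_cases ha : a ∈ S <;> simp [ha]⟩
      left_inv := by
        intro f
        ext a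
        by_cases ha : a ∈ S
        · simp [ha, (f.2.2 a).2 ha]
        · simp [ha]
      right_inv := by
        intro g
        ext a
        have := a.2
        simp [this] }

lemma cnt_eq_zero {V : Type} (G : SimpleGraph V) (z : ℕ) (S : Finset V) (a b : V)
    (ha : a ∈ S) (hb : b ∈ S) (hab : G.Adj a b) : cnt G z S = 0 := by
  unfold cnt
  have : IsEmpty {f : V → Fin (z + 1) // PropCol G (z + 1) f ∧ ∀ a, f a = 0 ↔ a ∈ S} :=
    ⟨fun f => f.2.1 hab (((f.2.2 a).2 ha).trans ((f.2.2 b).2 hb).symm)⟩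
  exact Nat.card_of_isEmpty

lemma card_zero_eq_sum {V : Type} [Fintype V] [DecidableEq V] (G : SimpleGraph V)
    [DecidableRel G.Adj] (z : ℕ) (u : V) :
    Nat.card {f : V → Fin (z + 1) // PropCol G (z + 1) f ∧ f u = 0} =
      ∑ T ∈ (univ.filter (fun a => a ≠ u ∧ ¬ G.Adj u a)).powerset, cnt G z (insert u T) := by
  classical
  rw [Nat.card_eq_fintype_card, Fintype.card_subtype]
  rw [card_eq_sum_card_fiberwise (f := fun f => (univ.filter (fun a => f a = 0)).erase u)
    (t := (univ.filter (fun a => a ≠ u ∧ ¬ G.Adj u a)).powerset)]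
  · apply sum_congr rfl
    intro T hT
    unfold cnt
    rw [Nat.card_eq_fintype_card, Fintype.card_subtype, filter_filter]
    congr 1
    ext f
    simp only [mem_filter, mem_univ, true_and]
    constructor
    · rintro ⟨⟨h1, h2⟩, h3⟩
      refine ⟨h1, fun a => ?_⟩
      rw [← h3]
      by_cases hau : a = u <;> simp [hau, h2]
    · rintro ⟨h1, h2⟩
      refine ⟨⟨h1, (h2 u).2 (mem_insert_self _ _)⟩, ?_⟩
      ext a
      simp only [mem_powerset] at hT
      have huT : u ∉ T := fun hh => by simpa using hT hh
      by_cases hau : a = u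
      · simp [hau, huT]
      · simp [hau, h2]
  · intro f hf
    simp only [coe_filter, mem_univ, true_and, Set.mem_ofPred_eq] at hf
    simp only [coe_powerset, Set.mem_preimage, Set.mem_powerset_iff]
    intro a ha
    simp only [coe_erase, coe_filter, mem_univ, true_and, Set.mem_sdiff, Set.mem_ofPred_eq,
      Set.mem_singleton_iff] at ha ⊢
    exact ⟨ha.2, fun hadj => hf.1 hadj (hf.2.trans ha.1.symm)⟩


lemma not_colorable_compl {V : Type} [DecidableEq V] (G : SimpleGraph V) (j : ℕ) (S : Finset V)
    (hS : ∀ a ∈ S, ∀ b ∈ S, ¬ G.Adj a b) (h : ¬ G.Colorable (j + 1)) :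
    ¬ (G.comap (fun a : {a // a ∉ S} => a.1)).Colorable j := by
  intro hc
  obtain ⟨g, hg⟩ := exists_propCol hc
  apply h
  apply colorable_of_propCol (f := fun a => if ha : a ∈ S then 0 else (g ⟨a, ha⟩).succ)
  intro a b hab
  by_cases ha : a ∈ S <;> by_cases hb : b ∈ S
  · exact absurd hab (hS a ha b hb)
  · simp [ha, hb, (Fin.succ_ne_zero _).symm]
  · simp [ha, hb]
  · simp only [ha, hb, dif_neg, not_false_eq_true]
    intro hh
    exact hg (u := ⟨a, ha⟩) (w := ⟨b, hb⟩) hab (Fin.succ_injective _ hh)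

lemma struct_step {V : Type} [Fintype V] [DecidableEq V] (G : SimpleGraph V) [DecidableRel G.Adj]
    (j : ℕ) (u : V) (K : Finset V) (hK : K.card = j + 1) (huK : u ∉ K)
    (hdeg : G.degree u = j + 1) (hnc : ¬ G.Colorable (j + 1))
    (hadj : ∀ a b, a ≠ u → b ≠ u → (G.Adj a b ↔ a ∈ K ∧ b ∈ K ∧ a ≠ b)) :
    ∃ L : Finset V, L.card = j + 1 + 1 ∧ StructOn G L := by
  have hN : (G.neighborFinset u).card = j + 1 := by simpa using hdeg
  by_cases hsub : K ⊆ G.neighborFinset u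
  · have heq : K = G.neighborFinset u := eq_of_subset_of_card_le hsub (by omega)
    have hmem : ∀ a, a ∈ K ↔ G.Adj u a := by intro a; rw [heq]; simp
    refine ⟨insert u K, by rw [card_insert_of_notMem huK, hK], ?_⟩
    intro a b
    by_cases ha : a = u <;> by_cases hb : b = u
    · subst ha; subst hb; simp
    · subst ha; simp [hb, hmem, Ne.symm hb]
    · subst hb; simp [ha, hmem, G.adj_comm]
    · rw [hadj a b ha hb]; simp [ha, hb]
  · obtain ⟨a, haK, haN⟩ := not_subset.1 hsub
    have haN' : ¬ G.Adj u a := by simpa using haN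
    rcases Nat.eq_zero_or_pos j with rfl | hj
    · obtain ⟨c, hc⟩ := card_eq_one.1 hK
      obtain ⟨b, hb⟩ := card_eq_one.1 hN
      have hmem : ∀ w, G.Adj u w ↔ w = b := by
        intro w; rw [← SimpleGraph.mem_neighborFinset, hb]; simp
      have hub : u ≠ b := ((hmem b).2 rfl).ne
      refine ⟨{u, b}, card_pair hub, ?_⟩
      have hno : ∀ p q, p ≠ u → q ≠ u → ¬ G.Adj p q := by
        intro p q hp hq h
        rw [hadj p q hp hq, hc] at h
        simp only [mem_singleton] at h
        exact h.2.2 (h.1.trans h.2.1.symm)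
      intro p q
      by_cases hp : p = u <;> by_cases hq : q = u
      · subst hp; subst hq; simp
      · subst hp; simp [hq, hmem, Ne.symm hq]
      · subst hq; rw [G.adj_comm]; simp [hp, hmem]
      · simp only [hno p q hp hq, mem_insert, mem_singleton, hp, hq, false_or, false_iff]
        rintro ⟨h1, h2, h3⟩
        exact h3 (h1.trans h2.symm)
    · exfalso
      apply hnc
      obtain ⟨a', ha'K, haa'⟩ : ∃ a' ∈ K, a' ≠ a := by
        by_contra! hh
        have : K ⊆ {a} := fun w hw => by simpa using hh w hw
        have := card_le_card this
        simp at this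
        omega
      let φ : K ≃ Fin (j + 1) := K.equivFinOfCardEq hK
      apply colorable_of_propCol (f := fun w => if hw : w ∈ K then φ ⟨w, hw⟩ else
        if w = u then φ ⟨a, haK⟩ else φ ⟨a', ha'K⟩)
      intro p q hpq
      have key : ∀ w, G.Adj u w → φ ⟨a, haK⟩ ≠
          (if hw : w ∈ K then φ ⟨w, hw⟩ else if w = u then φ ⟨a, haK⟩ else φ ⟨a', ha'K⟩) := by
        intro w huw
        have hwu : w ≠ u := huw.ne'
        by_cases hw : w ∈ K
        · simp only [hw, dif_pos]
          intro hh
          have := congrArg Subtype.val (φ.injective hh)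
          simp only at this
          exact haN' (this ▸ huw)
        · simp only [hw, dif_neg, not_false_eq_true, hwu, if_false]
          intro hh
          exact haa' (congrArg Subtype.val (φ.injective hh)).symm
      by_cases hp : p = u
      · subst hp
        have := key q hpq
        simpa [huK] using this
      · by_cases hq : q = u
        · subst hq
          have := (key p hpq.symm).symm
          simpa [huK] using this
        · obtain ⟨h1, h2, h3⟩ := (hadj p q hp hq).1 hpq
          simp only [h1, h2, dif_pos]
          intro hh
          exact h3 (congrArg Subtype.val (φ.injective hh))

/-- `K` in the vertex-deleted graph, transported to `V`. -/
lemma transport {V : Type} [DecidableEq V] (G : SimpleGraph V) (u : V) (S : Finset V)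
    (hS : S = {u}) (K : Finset {a // a ∉ S})
    (hst : StructOn (G.comap (fun a : {a // a ∉ S} => a.1)) K) :
    ∃ L : Finset V, L.card = K.card ∧ u ∉ L ∧
      ∀ a b, a ≠ u → b ≠ u → (G.Adj a b ↔ a ∈ L ∧ b ∈ L ∧ a ≠ b) := by
  subst hS
  refine ⟨K.map (Function.Embedding.subtype _), card_map _, by simp, ?_⟩
  intro a b ha hb
  have := hst ⟨a, by simpa using ha⟩ ⟨b, by simpa using hb⟩
  simp only [SimpleGraph.comap_adj] at this
  rw [this]
  simp [ha, hb]

theorem main_bound (j : ℕ) : ∀ (V : Type) [Fintype V] (H : SimpleGraph V) (y : ℕ),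
    ¬ H.Colorable j → j + 1 ≤ y →
    numColorings H y ≤ y.descFactorial (j + 1) * y ^ (Fintype.card V - (j + 1)) ∧
    (numColorings H y = y.descFactorial (j + 1) * y ^ (Fintype.card V - (j + 1)) →
      ∃ K : Finset V, K.card = j + 1 ∧ StructOn H K) := by
  induction j with
  | zero =>
    intro V _ H y hnc hy
    classical
    have hne : Nonempty V := by
      by_contra hh
      rw [not_nonempty_iff] at hh
      exact hnc (SimpleGraph.Colorable.of_isEmpty _)
    have hpos : 0 < Fintype.card V := Fintype.card_pos
    have e1 : y.descFactorial (0 + 1) * y ^ (Fintype.card V - (0 + 1)) =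
        Fintype.card (V → Fin y) := by
      rw [Fintype.card_fun, Fintype.card_fin, zero_add, Nat.descFactorial_one, ← pow_succ']
      congr 1; omega
    rw [e1]
    unfold numColorings
    rw [Nat.card_eq_fintype_card]
    refine ⟨Fintype.card_subtype_le _, ?_⟩
    intro heq
    obtain ⟨v⟩ := hne
    refine ⟨{v}, by simp, ?_⟩
    have hno : ∀ a b, ¬ H.Adj a b := by
      intro a b hab
      have := Fintype.card_subtype_lt
        (p := fun f : V → Fin y => ∀ ⦃u w : V⦄, H.Adj u w → f u ≠ f w)
        (x := fun _ => ⟨0, hy⟩) (fun h => h hab rfl)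
      omega
    intro a b
    simp only [hno, mem_singleton, false_iff]
    rintro ⟨h1, h2, h3⟩
    exact h3 (h1.trans h2.symm)
  | succ j ih =>
    intro V _ H y hnc hy
    classical
    obtain ⟨z, rfl⟩ : ∃ z, y = z + 1 := ⟨y - 1, by omega⟩
    obtain ⟨u, hu⟩ := exists_degree_ge H (j + 1) hnc
    set W := univ.filter (fun a => a ≠ u ∧ ¬ H.Adj u a) with hW
    set m := Fintype.card V with hm
    have hWc : W.card + H.degree u + 1 = m := by
      have h1 : W = (insert u (H.neighborFinset u))ᶜ := by
        ext a; simp [hW]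
      rw [h1, card_compl, card_insert_of_notMem (by simp), SimpleGraph.card_neighborFinset_eq_degree]
      have := H.degree_lt_card_verts u
      omega
    set N := m - (j + 1 + 1) with hN
    have hwN : W.card ≤ N := by omega
    set D := z.descFactorial (j + 1) with hD
    have hDpos : 0 < D := Nat.descFactorial_pos.2 (by omega)
    have hterm : ∀ T ∈ W.powerset, cnt H z (insert u T) ≤ D * z ^ (N - T.card) := by
      intro T hT
      by_cases hind : ∀ a ∈ insert u T, ∀ b ∈ insert u T, ¬ H.Adj a b
      · rw [cnt_eq H z _ hind]
        have := (ih _ _ z (not_colorable_compl H j _ hind hnc) (by omega)).1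
        have huT : u ∉ T := fun hh => by simpa [hW] using (mem_powerset.1 hT) hh
        have hc : Fintype.card {a // a ∉ insert u T} - (j + 1) = N - T.card := by
          rw [Fintype.card_subtype_compl, Fintype.card_coe, card_insert_of_notMem huT]
          omega
        rwa [hc] at this
      · push Not at hind
        obtain ⟨a, ha, b, hb, hab⟩ := hind
        rw [cnt_eq_zero H z _ a b ha hb hab]
        exact Nat.zero_le _
    have hsum : ∑ T ∈ W.powerset, D * z ^ (N - T.card) =
        D * (z ^ (N - W.card) * (z + 1) ^ W.card) := by
      rw [← mul_sum]
      congr 1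
      rw [add_comm z 1, ← sum_pow_mul_eq_add_pow, mul_sum]
      apply sum_congr rfl
      intro T hT
      have := card_le_card (mem_powerset.1 hT)
      rw [one_pow, one_mul, ← pow_add]
      congr 1; omega
    have hle1 := sum_le_sum hterm
    have hle2 : z ^ (N - W.card) * (z + 1) ^ W.card ≤ (z + 1) ^ N := by
      calc _ ≤ (z + 1) ^ (N - W.card) * (z + 1) ^ W.card := by gcongr; omega
        _ = _ := by rw [← pow_add]; congr 1; omega
    have hle3 : D * (z ^ (N - W.card) * (z + 1) ^ W.card) ≤ D * (z + 1) ^ N := by gcongr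
    rw [numColorings_succ H z u, card_zero_eq_sum, Nat.succ_descFactorial_succ, mul_assoc]
    rw [hsum] at hle1
    refine ⟨Nat.mul_le_mul_left _ (hle1.trans hle3), ?_⟩
    intro heq
    have heq' := Nat.eq_of_mul_eq_mul_left (Nat.succ_pos z) heq
    have e1 : ∑ T ∈ W.powerset, cnt H z (insert u T) = ∑ T ∈ W.powerset, D * z ^ (N - T.card) := by
      rw [hsum]; exact le_antisymm hle1 (hle3.trans heq'.ge)
    have e2 : z ^ (N - W.card) * (z + 1) ^ W.card = (z + 1) ^ N := by
      apply Nat.eq_of_mul_eq_mul_left hDpos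
      exact le_antisymm hle3 (heq'.ge.trans hle1)
    have e3 : N - W.card = 0 := by
      by_contra hne
      have h1 : z ^ (N - W.card) < (z + 1) ^ (N - W.card) :=
        Nat.pow_lt_pow_left (Nat.lt_succ_self z) hne
      have h2 : z ^ (N - W.card) * (z + 1) ^ W.card < (z + 1) ^ (N - W.card) * (z + 1) ^ W.card :=
        Nat.mul_lt_mul_of_pos_right h1 (by positivity)
      rw [← pow_add, Nat.sub_add_cancel hwN] at h2
      omega
    have e4 := (sum_eq_sum_iff_of_le hterm).1 e1 ∅ (by simp)
    have hind : ∀ a ∈ insert u (∅ : Finset V), ∀ b ∈ insert u (∅ : Finset V), ¬ H.Adj a b := by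
      simp
    rw [cnt_eq H z _ hind] at e4
    have hc : Fintype.card {a // a ∉ insert u (∅ : Finset V)} - (j + 1) = N - (∅ : Finset V).card := by
      rw [Fintype.card_subtype_compl, Fintype.card_coe, card_insert_of_notMem (by simp)]
      simp only [card_empty]
      omega
    rw [← hc] at e4
    obtain ⟨K, hK, hst⟩ :=
      (ih _ _ z (not_colorable_compl H j _ hind hnc) (by omega)).2 e4
    obtain ⟨L, hL, huL, hadj⟩ := transport H u _ (by simp) K hst
    exact struct_step H j u L (hL.trans hK) huL (by omega) hnc hadj

end aux


/-- If `G` is a `k`-chromatic graph of order `n` with a vertex of degree `n-1` and `x ≥ k`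
is a natural number, then `π(G,x) = (x)_↓k · (x-1)^(n-k)` holds iff `G` is a connected
`k`-chromatic graph of order `n` with exactly `C(k,2) + n - k` edges and clique number `k`. -/
theorem numColorings_eq_iff_of_universal_vertex {V : Type} [Fintype V] [DecidableEq V]
    (G : SimpleGraph V) [DecidableRel G.Adj] (n k : ℕ) (hn : Fintype.card V = n)
    (hk : G.chromaticNumber = k) (huniv : ∃ v : V, G.degree v = n - 1)
    (x : ℕ) (hx : k ≤ x) :
    numColorings G x = x.descFactorial k * (x - 1) ^ (n - k) ↔
      (G.Connected ∧ G.edgeFinset.card = k.choose 2 + n - k ∧ G.cliqueNum = k) := by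
  obtain ⟨u, hu⟩ := huniv
  have hcol : G.Colorable k := SimpleGraph.chromaticNumber_le_iff_colorable.1 hk.le
  have hnc : ∀ i, G.Colorable i → k ≤ i := by
    intro i hi
    have := SimpleGraph.chromaticNumber_le_iff_colorable.2 hi
    rw [hk] at this
    exact_mod_cast this
  have hk0 : k ≠ 0 := by
    rintro rfl
    exact (SimpleGraph.colorable_zero_iff.1 hcol).false u
  obtain ⟨j, rfl⟩ := Nat.exists_eq_succ_of_ne_zero hk0
  obtain ⟨z, rfl⟩ : ∃ z, x = z + 1 := ⟨x - 1, by omega⟩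
  have hkn : j + 1 ≤ n := hn ▸ hnc _ G.colorable_of_fintype
  simp only [Nat.succ_eq_add_one] at *
  -- the vertex is adjacent to everything
  have huadj : ∀ a, a ≠ u → G.Adj u a := by
    have h1 : G.neighborFinset u = Finset.univ.erase u := by
      apply Finset.eq_of_subset_of_card_le
      · intro a ha
        have : G.Adj u a := by simpa using ha
        simp [this.ne']
      · rw [Finset.card_erase_of_mem (Finset.mem_univ _), Finset.card_univ, hn,
          SimpleGraph.card_neighborFinset_eq_degree, hu]
    intro a ha
    rw [← SimpleGraph.mem_neighborFinset, h1]
    simp [ha]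
  have hind : ∀ a ∈ insert u (∅ : Finset V), ∀ b ∈ insert u (∅ : Finset V), ¬ G.Adj a b := by
    simp
  have hWe : (Finset.univ.filter (fun a => a ≠ u ∧ ¬ G.Adj u a)) = ∅ := by
    ext a
    simp only [Finset.mem_filter, Finset.mem_univ, true_and, Finset.notMem_empty, iff_false]
    rintro ⟨h1, h2⟩
    exact h2 (huadj a h1)
  rw [numColorings_succ G z u, card_zero_eq_sum, hWe, Finset.powerset_empty, Finset.sum_singleton,
    cnt_eq G z _ hind, Nat.succ_descFactorial_succ, mul_assoc,
    Nat.mul_right_inj (Nat.succ_ne_zero z), Nat.add_sub_cancel]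
  set H := G.comap (fun a : {a // a ∉ insert u (∅ : Finset V)} => a.1) with hH
  have hcard : Fintype.card {a // a ∉ insert u (∅ : Finset V)} = n - 1 := by
    rw [Fintype.card_subtype_compl, Fintype.card_coe, Finset.card_insert_of_notMem (by simp), hn]
    simp
  have hexp : n - (j + 1) = Fintype.card {a // a ∉ insert u (∅ : Finset V)} - j := by omega
  have step1 : numColorings H z = z.descFactorial j * z ^ (n - (j + 1)) ↔
      ∃ K : Finset {a // a ∉ insert u (∅ : Finset V)}, K.card = j ∧ StructOn H K := by
    rw [hexp]
    constructor
    · intro h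
      rcases Nat.eq_zero_or_pos j with rfl | hj
      · refine ⟨∅, rfl, ?_⟩
        obtain ⟨f, hf⟩ := exists_propCol hcol
        intro a b
        simp only [Finset.notMem_empty, false_and, iff_false]
        intro hab
        exact hf hab (Subsingleton.elim (α := Fin 1) _ _)
      · obtain ⟨i, rfl⟩ : ∃ i, j = i + 1 := ⟨j - 1, by omega⟩
        refine (main_bound i _ H z ?_ (by omega)).2 h
        apply not_colorable_compl G i _ hind
        intro hh
        have := hnc _ hh
        omega
    · rintro ⟨K, rfl, hst⟩
      exact numColorings_struct H K hst z
  rw [step1]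
  clear step1
  have hedge := G.card_edgeFinset_deleteIncidenceSet u
  have hdle : G.degree u ≤ G.edgeFinset.card := by
    rw [← SimpleGraph.card_incidenceFinset_eq_degree]
    exact Finset.card_le_card (G.incidenceFinset_subset u)
  have hchoose : (j + 1).choose 2 = j + j.choose 2 := by
    rw [Nat.choose_succ_succ' j 1, Nat.choose_one_right]
  have hmemE : ∀ a b, s(a, b) ∈ (G.deleteIncidenceSet u).edgeFinset ↔
      G.Adj a b ∧ a ≠ u ∧ b ≠ u := by
    intro a b
    rw [SimpleGraph.mem_edgeFinset, SimpleGraph.mem_edgeSet, SimpleGraph.deleteIncidenceSet_adj]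
  have hmemL : ∀ (L : Finset V) a b, s(a, b) ∈ L.offDiag.image (fun p : V × V => s(p.1, p.2)) ↔
      a ∈ L ∧ b ∈ L ∧ a ≠ b := by
    intro L a b
    simp only [Finset.mem_image, Finset.mem_offDiag, Prod.exists, Sym2.eq_iff]
    constructor
    · rintro ⟨p, q, ⟨h1, h2, h3⟩, ⟨rfl, rfl⟩ | ⟨rfl, rfl⟩⟩
      · exact ⟨h1, h2, h3⟩
      · exact ⟨h2, h1, h3.symm⟩
    · intro h
      exact ⟨a, b, h, Or.inl ⟨rfl, rfl⟩⟩
  have hcardL : ∀ L : Finset V, (L.offDiag.image (fun p : V × V => s(p.1, p.2))).card =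
      L.card.choose 2 := fun L => Sym2.card_image_offDiag L
  constructor
  · rintro ⟨K, hK, hst⟩
    obtain ⟨L, hL, huL, hadj⟩ := transport G u _ (by simp) K hst
    have hLu : ∀ a ∈ L, a ≠ u := fun a ha h => huL (h ▸ ha)
    refine ⟨?_, ?_, ?_⟩
    · rw [SimpleGraph.connected_iff_exists_forall_reachable]
      refine ⟨u, fun w => ?_⟩
      rcases eq_or_ne w u with rfl | hw
      · exact SimpleGraph.Reachable.refl _
      · exact (huadj w hw).reachable
    · have h1 : (G.deleteIncidenceSet u).edgeFinset =
          L.offDiag.image (fun p : V × V => s(p.1, p.2)) := by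
        ext e
        induction e using Sym2.ind with
        | _ a b =>
          rw [hmemE, hmemL]
          constructor
          · rintro ⟨h1, h2, h3⟩
            exact (hadj a b h2 h3).1 h1
          · intro h
            have ha := hLu a h.1
            have hb := hLu b h.2.1
            exact ⟨(hadj a b ha hb).2 h, ha, hb⟩
      rw [h1, hcardL, hL, hK] at hedge
      omega
    · apply le_antisymm
      · have := G.cliqueNum_le_chromaticNumber
        rw [hk] at this
        exact_mod_cast this
      · have hcl : G.IsClique (insert u L : Finset V) := by
          intro a ha b hb hab
          simp only [Finset.coe_insert, Set.mem_insert_iff, Finset.mem_coe] at ha hb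
          rcases ha with rfl | ha
          · exact huadj b hab.symm
          · rcases hb with rfl | hb
            · exact (huadj a hab).symm
            · exact (hadj a b (hLu a ha) (hLu b hb)).2 ⟨ha, hb, hab⟩
        have := hcl.card_le_cliqueNum
        rw [Finset.card_insert_of_notMem huL, hL, hK] at this
        exact this
  · rintro ⟨-, hE, hcn⟩
    obtain ⟨Q, hQ⟩ := G.exists_isNClique_cliqueNum
    rw [hcn] at hQ
    have hQc : G.IsClique Q := hQ.isClique
    have hQn : Q.card = j + 1 := hQ.card_eq
    have huQ : u ∈ Q := by
      by_contra huQ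
      have hcl : G.IsClique (insert u Q : Finset V) := by
        rw [Finset.coe_insert]
        exact hQc.insert (fun b _ hb => huadj b hb.symm)
      have := hcl.card_le_of_colorable hcol
      rw [Finset.card_insert_of_notMem huQ] at this
      omega
    set L := Q.erase u with hLdef
    have hL : L.card = j := by rw [Finset.card_erase_of_mem huQ]; omega
    have h1 : L.offDiag.image (fun p : V × V => s(p.1, p.2)) =
        (G.deleteIncidenceSet u).edgeFinset := by
      apply Finset.eq_of_subset_of_card_le
      · intro e
        induction e using Sym2.ind with
        | _ a b =>
          rw [hmemE, hmemL]
          rintro ⟨ha, hb, hab⟩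
          rw [hLdef, Finset.mem_erase] at ha hb
          exact ⟨hQc ha.2 hb.2 hab, ha.1, hb.1⟩
      · rw [hcardL, hL]
        omega
    refine ⟨L.subtype _, ?_, ?_⟩
    · rw [Finset.card_subtype, Finset.filter_true_of_mem, hL]
      intro a ha
      rw [hLdef, Finset.mem_erase] at ha
      simpa using ha.1
    · intro a b
      have ha : a.1 ≠ u := by simpa using a.2
      have hb : b.1 ≠ u := by simpa using b.2
      have h2 := hmemE a.1 b.1
      rw [← h1, hmemL] at h2
      rw [hH, SimpleGraph.comap_adj, Finset.mem_subtype, Finset.mem_subtype]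
      constructor
      · intro hab
        obtain ⟨p, q, r⟩ := h2.2 ⟨hab, ha, hb⟩
        exact ⟨p, q, fun h => r (congrArg Subtype.val h)⟩
      · rintro ⟨p, q, r⟩
        exact (h2.1 ⟨p, q, fun h => r (Subtype.ext h)⟩).1
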